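/- Liouville-type theorem: assume m > 4. Suppose f ∈ C²(ℝ^m×𝔹^m, ℋ_k) is bounded on ℝ^m × 𝔹^m and satisfies 𝒟_k f = 0 in ℝ^m × 𝔹^m. Then f does not depend on the first variable: f(x,ν) = f(0,ν) for all x ∈ ℝ^m and ν ∈ 𝔹^m, so that f coincides with a single element of ℋ_k in the second variable. -/

import Mathlib

noncomputable section

open MeasureTheory Metric Filter Topology
open scoped RealInnerProductSpace

/-- `ℝ^m` as a Euclidean space. -/
abbrev Evec (m : ℕ) : Type := EuclideanSpace ℝ (Fin m)

/-- Partial derivative in the `i`-th coordinate direction. -/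
def pdv {m : ℕ} (i : Fin m) (f : Evec m → ℝ) (x : Evec m) : ℝ :=
  fderiv ℝ f x (EuclideanSpace.single i 1)

/-- Euclidean Laplacian on `ℝ^m`. -/
def lapl {m : ℕ} (f : Evec m → ℝ) (x : Evec m) : ℝ :=
  ∑ i : Fin m, pdv i (pdv i f) x

/-- `p` is a real-valued polynomial function on `ℝ^m`, homogeneous of degree `k` and
harmonic; i.e. `p ∈ ℋ_k`. -/
def IsHk (m k : ℕ) (p : Evec m → ℝ) : Prop :=
  (∃ P : MvPolynomial (Fin m) ℝ, ∀ x : Evec m, p x = MvPolynomial.eval (fun i => x i) P) ∧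
  (∀ (c : ℝ) (x : Evec m), p (c • x) = c ^ k * p x) ∧
  (∀ x : Evec m, lapl p x = 0)

/-- The surface measure `dS` on the unit sphere `𝕊^{m-1}`, as a measure on `ℝ^m`. -/
def sphereM (m : ℕ) : Measure (Evec m) :=
  Measure.map Subtype.val ((volume : Measure (Evec m)).toSphere)

/-- `ω_m`, the surface area of the unit sphere `𝕊^{m-1}`. -/
def omegaS (m : ℕ) : ℝ := (sphereM m Set.univ).toReal

/-- The constant `c_{m,k} = 2(m+2k-2)/((m-2)ω_m)`. -/
def cmk (m k : ℕ) : ℝ := 2 * ((m : ℝ) + 2 * k - 2) / (((m : ℝ) - 2) * omegaS m)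

/-- The reflection `R_a(u) = u - 2⟨a,u⟩a/|a|²` (in Clifford notation `a u a/|a|²`). -/
def reflv {m : ℕ} (a u : Evec m) : Evec m :=
  u - (2 * ⟪a, u⟫ / ‖a‖ ^ 2) • a

/-- `dim ℋ_k`. -/
def hdim (m k : ℕ) : ℕ :=
  Nat.choose (m + k - 1) (m - 1) - Nat.choose (m + k - 3) (m - 1)

/-- `Z` is the reproducing kernel `Z_k` of `ℋ_k` on the unit sphere: a symmetric,
rotation invariant kernel, bounded by `dim ℋ_k` on the unit ball, belonging to `ℋ_k`
in the first variable and reproducing elements of `ℋ_k` from their spherical values. -/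
def IsZk (m k : ℕ) (Z : Evec m → Evec m → ℝ) : Prop :=
  (∀ v : Evec m, IsHk m k (fun u => Z u v)) ∧
  (∀ p : Evec m → ℝ, IsHk m k p → ∀ v : Evec m, (∫ u, Z u v * p u ∂(sphereM m)) = p v) ∧
  (∀ u v : Evec m, Z u v = Z v u) ∧
  (∀ u v : Evec m, ‖u‖ ≤ 1 → ‖v‖ ≤ 1 → |Z u v| ≤ (hdim m k : ℝ)) ∧
  (∀ (A : Evec m ≃ₗᵢ[ℝ] Evec m) (u v : Evec m), Z (A u) (A v) = Z u v)

/-- The point `(x', y) ∈ ℝ^{d+1}` with first `d` coordinates `x'` and last coordinate `y`. -/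
def upP (d : ℕ) (x' : Evec d) (y : ℝ) : Evec (d + 1) :=
  (EuclideanSpace.equiv (Fin (d + 1)) ℝ).symm
    (Fin.snoc (⇑(EuclideanSpace.equiv (Fin d) ℝ) x') y)

/-- The first `d` coordinates of a point of `ℝ^{d+1}`. -/
def downP (d : ℕ) (x : Evec (d + 1)) : Evec d :=
  (EuclideanSpace.equiv (Fin d) ℝ).symm (fun i => x (Fin.castSucc i))

/-- The last coordinate of a point of `ℝ^{d+1}`. -/
def lastP (d : ℕ) (x : Evec (d + 1)) : ℝ := x (Fin.last d)

/-- The Poisson kernel `P_H` for bosonic Laplacians in the upper half-space `ℝ^{d+1}_+`,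
`P_H(x,t,u,v) = c_{m,k} (y/|x-t|^m) Z_k(R_{x-t}(u), v)` with `m = d+1`, `x = (x',y)`,
`t = (t',0)`. -/
def PH (d k : ℕ) (Z : Evec (d + 1) → Evec (d + 1) → ℝ) (x' : Evec d) (y : ℝ)
    (t' : Evec d) (u v : Evec (d + 1)) : ℝ :=
  cmk (d + 1) k * (y / ‖upP d x' y - upP d t' 0‖ ^ (d + 1)) *
    Z (reflv (upP d x' y - upP d t' 0) u) v

/-- The Poisson integral `P_H[f]` in the upper half-space. -/
def PHint (d k : ℕ) (Z : Evec (d + 1) → Evec (d + 1) → ℝ)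
    (f : Evec d → Evec (d + 1) → ℝ) (x' : Evec d) (y : ℝ) (v : Evec (d + 1)) : ℝ :=
  ∫ t' : Evec d, (∫ u, PH d k Z x' y t' u v * f t' u ∂(sphereM (d + 1)))

/-- The Poisson kernel `P_B` for bosonic Laplacians in the unit ball. -/
def PB (m k : ℕ) (Z : Evec m → Evec m → ℝ) (x ζ ω ν : Evec m) : ℝ :=
  (cmk m k / 2) * ((1 - ‖x‖ ^ 2) / ‖x - ζ‖ ^ m) * Z (reflv (x - ζ) ω) ν

/-- The Poisson integral `P_B[h]` in the unit ball. -/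
def PBint (m k : ℕ) (Z : Evec m → Evec m → ℝ) (h : Evec m → Evec m → ℝ)
    (x ν : Evec m) : ℝ :=
  ∫ ζ, (∫ ω, PB m k Z x ζ ω ν * h ζ ω ∂(sphereM m)) ∂(sphereM m)

/-- Partial derivative in the first (`x`) variable. -/
def pd1 {m : ℕ} (i : Fin m) (f : Evec m → Evec m → ℝ) : Evec m → Evec m → ℝ :=
  fun x u => fderiv ℝ (fun x₁ => f x₁ u) x (EuclideanSpace.single i 1)

/-- Partial derivative in the second (`u`) variable. -/
def pd2 {m : ℕ} (i : Fin m) (f : Evec m → Evec m → ℝ) : Evec m → Evec m → ℝ :=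
  fun x u => fderiv ℝ (fun u₁ => f x u₁) u (EuclideanSpace.single i 1)

/-- The bosonic Laplacian `𝒟_k`. -/
def Dk (m k : ℕ) (f : Evec m → Evec m → ℝ) : Evec m → Evec m → ℝ := fun x u =>
  (∑ i : Fin m, pd1 i (pd1 i f) x u)
    - (4 / ((m : ℝ) + 2 * k - 2)) *
        ∑ i : Fin m, ∑ j : Fin m, u i * pd1 i (pd2 j (pd1 j f)) x u
    + (4 * ‖u‖ ^ 2 / (((m : ℝ) + 2 * k - 2) * ((m : ℝ) + 2 * k - 4))) *
        ∑ i : Fin m, ∑ j : Fin m, pd2 i (pd1 i (pd2 j (pd1 j f))) x u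

/-- `f ∈ C²(Ω×𝔹^m, ℋ_k)`: twice continuously differentiable on `Ω × 𝔹^m` and, for each
fixed `x ∈ Ω`, coinciding in the second variable with an element of `ℋ_k`. -/
def C2Hk (m k : ℕ) (Ω : Set (Evec m)) (f : Evec m → Evec m → ℝ) : Prop :=
  ContDiffOn ℝ 2 (fun q : Evec m × Evec m => f q.1 q.2) (Ω ×ˢ ball (0 : Evec m) 1) ∧
  ∀ x ∈ Ω, ∃ q, IsHk m k q ∧ ∀ u ∈ closedBall (0 : Evec m) 1, f x u = q u

/-- The `L^p` norm `(∫_{ℝ^{m-1}} ∫_{𝕊^{m-1}} |f(x',u)|^p dS(u) dx')^{1/p}` (`m = d+1`),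
valued in `ℝ≥0∞`. -/
def lpH (d : ℕ) (p : ℝ) (f : Evec d → Evec (d + 1) → ℝ) : ENNReal :=
  (∫⁻ x' : Evec d, ∫⁻ u, ENNReal.ofReal (|f x' u| ^ p) ∂(sphereM (d + 1))) ^ (1 / p)

/-- `f ∈ L^p(ℝ^{m-1}×𝔹^m, ℋ_k)` (`m = d+1`). -/
def MemLpH (d k : ℕ) (p : ℝ) (f : Evec d → Evec (d + 1) → ℝ) : Prop :=
  Measurable (fun q : Evec d × Evec (d + 1) => f q.1 q.2) ∧
  (∀ x' : Evec d, ∃ q, IsHk (d + 1) k q ∧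
    ∀ u ∈ closedBall (0 : Evec (d + 1)) 1, f x' u = q u) ∧
  lpH d p f < ⊤

/-- The `L^p` norm `(∫_{𝕊^{m-1}} ∫_{𝕊^{m-1}} |h(ζ,ω)|^p dS(ω) dS(ζ))^{1/p}`,
valued in `ℝ≥0∞`. -/
def lpS (m : ℕ) (p : ℝ) (h : Evec m → Evec m → ℝ) : ENNReal :=
  (∫⁻ ζ, ∫⁻ ω, ENNReal.ofReal (|h ζ ω| ^ p) ∂(sphereM m) ∂(sphereM m)) ^ (1 / p)

/-- `h ∈ L^p(𝕊^{m-1}×𝔹^m, ℋ_k)`. -/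
def MemLpS (m k : ℕ) (p : ℝ) (h : Evec m → Evec m → ℝ) : Prop :=
  Measurable (fun q : Evec m × Evec m => h q.1 q.2) ∧
  (∀ ζ : Evec m, ‖ζ‖ = 1 → ∃ q, IsHk m k q ∧
    ∀ ω ∈ closedBall (0 : Evec m) 1, h ζ ω = q ω) ∧
  lpS m p h < ⊤

/-- Iterated partial derivative `D_x^α` in the first variable, for a multi-index `α ∈ ℕ^m`. -/
def Dx {m : ℕ} (α : Fin m → ℕ) (f : Evec m → Evec m → ℝ) : Evec m → Evec m → ℝ :=
  (List.finRange m).foldr (fun i g => (pd1 i)^[α i] g) f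

/-- Iterated partial derivative `D_ν^β` in the second variable, for a multi-index `β ∈ ℕ^m`. -/
def Dv {m : ℕ} (β : Fin m → ℕ) (f : Evec m → Evec m → ℝ) : Evec m → Evec m → ℝ :=
  (List.finRange m).foldr (fun i g => (pd2 i)^[β i] g) f

/-!
Write `𝒟_k = Δ - a ⟨u, ∂_x⟩ div + b |u|² div²` with `div = ∑ᵢ ∂_{uᵢ} ∂_{xᵢ}`. Applying `div ^ j` to
`𝒟_k f = 0` gives `(1 - j a + j (j - 1) b) Δ (div ^ j f) = R`, where `R` is built from
`x`-derivatives of `div ^ (j + 1) f`. The scalar equals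
`(m + 2(k - j) - 2)(m + 2(k - j) - 4) / ((m + 2k - 2)(m + 2k - 4))`, nonzero for `j ≤ k`, `m > 4`.
As `f` has degree `k` in `u`, `div ^ (k + 1) f = 0`, and one descends in `j`: if the
`x`-derivatives of `div ^ (j + 1) f` vanish, then `div ^ j f` is bounded and harmonic in `x`, hence
constant in `x` by Liouville's theorem. Convolving `f` in `x` with a bump function beforehand makes
all derivatives exist and be bounded, and `f` is a limit of such convolutions.
-/

section PartialDerivatives

variable {m : ℕ}

lemma contDiff_pdv {n p : WithTop ℕ∞} {g : Evec m → ℝ} (hg : ContDiff ℝ n g) (hp : p + 1 ≤ n)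
    (i : Fin m) : ContDiff ℝ p (pdv i g) :=
  (hg.fderiv_right hp).clm_apply contDiff_const

lemma differentiable_pdv {g : Evec m → ℝ} (hg : ContDiff ℝ 2 g) (i : Fin m) :
    Differentiable ℝ (pdv i g) :=
  (contDiff_pdv (p := 1) hg (by norm_num) i).differentiable (by norm_num)

lemma pdv_const (c : ℝ) (i : Fin m) : pdv i (fun _ => c) = fun _ => 0 := by
  funext x
  simp [pdv]

lemma pdv_add {g h : Evec m → ℝ} (hg : Differentiable ℝ g) (hh : Differentiable ℝ h)
    (i : Fin m) : pdv i (fun x => g x + h x) = fun x => pdv i g x + pdv i h x := by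
  funext x
  simp [pdv, fderiv_fun_add (hg x) (hh x)]

lemma pdv_sum {ι : Type*} (s : Finset ι) {g : ι → Evec m → ℝ}
    (hg : ∀ a ∈ s, Differentiable ℝ (g a)) (i : Fin m) :
    pdv i (fun x => ∑ a ∈ s, g a x) = fun x => ∑ a ∈ s, pdv i (g a) x := by
  funext x
  simp [pdv, fderiv_fun_sum fun a ha => hg a ha x]

lemma pdv_const_mul {g : Evec m → ℝ} (hg : Differentiable ℝ g) (c : ℝ) (i : Fin m) :
    pdv i (fun x => c * g x) = fun x => c * pdv i g x := by
  funext x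
  simp [pdv, fderiv_const_mul (hg x)]

lemma pdv_mul {g h : Evec m → ℝ} (hg : Differentiable ℝ g) (hh : Differentiable ℝ h)
    (i : Fin m) : pdv i (fun x => g x * h x) = fun x => g x * pdv i h x + h x * pdv i g x := by
  funext x
  simp [pdv, fderiv_fun_mul (hg x) (hh x)]

lemma pdv_coord (i j : Fin m) :
    pdv i (fun x : Evec m => x j) = fun _ => if j = i then 1 else 0 := by
  funext x
  have : HasFDerivAt (fun y : Evec m => y j) (EuclideanSpace.proj (𝕜 := ℝ) j) x :=
    (EuclideanSpace.proj (𝕜 := ℝ) j).hasFDerivAt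
  simp [pdv, this.fderiv]

lemma pdv_comm {g : Evec m → ℝ} (hg : ContDiff ℝ 2 g) (i j : Fin m) :
    pdv i (pdv j g) = pdv j (pdv i g) := by
  funext x
  have hd : DifferentiableAt ℝ (fderiv ℝ g) x :=
    (hg.fderiv_right (m := 1) (by norm_num)).differentiable (by norm_num) x
  have hsymm := (hg.contDiffAt (x := x)).isSymmSndFDerivAt (by simp)
  have hsnd (v w : Evec m) :
      fderiv ℝ (fun y => fderiv ℝ g y v) x w = fderiv ℝ (fderiv ℝ g) x w v := by
    rw [fderiv_clm_apply hd (differentiableAt_const v)]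
    simp
  change fderiv ℝ (fun y => fderiv ℝ g y _) x _ = fderiv ℝ (fun y => fderiv ℝ g y _) x _
  rw [hsnd, hsnd]
  exact hsymm _ _

lemma eq_of_pdv_eq_zero {g : Evec m → ℝ} (hg : Differentiable ℝ g)
    (h : ∀ i x, pdv i g x = 0) (x y : Evec m) : g x = g y := by
  refine is_const_of_fderiv_eq_zero hg (fun z => ?_) x y
  refine ContinuousLinearMap.coe_injective
    ((EuclideanSpace.basisFun (Fin m) ℝ).toBasis.ext fun i => ?_)
  simpa [pdv] using h i z

end PartialDerivatives

section Laplacian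

variable {m : ℕ}

lemma lapl_add {g h : Evec m → ℝ} (hg : ContDiff ℝ 2 g) (hh : ContDiff ℝ 2 h) (x : Evec m) :
    lapl (fun y => g y + h y) x = lapl g x + lapl h x := by
  simp only [lapl, ← Finset.sum_add_distrib]
  refine Finset.sum_congr rfl fun i _ => ?_
  rw [pdv_add (hg.differentiable two_ne_zero) (hh.differentiable two_ne_zero),
    pdv_add (differentiable_pdv hg i) (differentiable_pdv hh i)]

lemma lapl_const_mul {g : Evec m → ℝ} (hg : ContDiff ℝ 2 g) (c : ℝ) (x : Evec m) :
    lapl (fun y => c * g y) x = c * lapl g x := by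
  simp only [lapl, Finset.mul_sum]
  refine Finset.sum_congr rfl fun i _ => ?_
  rw [pdv_const_mul (hg.differentiable two_ne_zero), pdv_const_mul (differentiable_pdv hg i)]

lemma lapl_mul_self {g : Evec m → ℝ} (hg : ContDiff ℝ 2 g) (x : Evec m) :
    lapl (fun y => g y * g y) x = 2 * ∑ i, pdv i g x ^ 2 + 2 * g x * lapl g x := by
  have hd := hg.differentiable two_ne_zero
  simp only [lapl, Finset.mul_sum, ← Finset.sum_add_distrib]
  refine Finset.sum_congr rfl fun i _ => ?_
  have hd₁ := differentiable_pdv hg i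
  rw [pdv_mul hd hd, pdv_add (hd.fun_mul hd₁) (hd.fun_mul hd₁), pdv_mul hd hd₁]
  ring

lemma lapl_norm_sq (x : Evec m) : lapl (fun y : Evec m => ‖y‖ ^ 2) x = 2 * m := by
  have hpdv (i : Fin m) : pdv i (fun y : Evec m => ‖y‖ ^ 2) = fun y => 2 * y i := by
    funext y
    simp [pdv, fderiv_norm_sq_apply, EuclideanSpace.inner_single_right]
  have hd (i : Fin m) : Differentiable ℝ fun y : Evec m => y i :=
    (EuclideanSpace.proj (𝕜 := ℝ) i).differentiable
  simp only [lapl, hpdv, pdv_const_mul (hd _), pdv_coord]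
  simp [mul_comm]

lemma lapl_pdv {g : Evec m → ℝ} (hg : ContDiff ℝ 3 g) (i : Fin m) :
    lapl (pdv i g) = pdv i (lapl g) := by
  have hg₂ : ContDiff ℝ 2 g := hg.of_le (by norm_num)
  have hpdv (j : Fin m) : ContDiff ℝ 2 (pdv j g) := contDiff_pdv hg (by norm_num) j
  funext x
  change ∑ j, pdv j (pdv j (pdv i g)) x = pdv i (fun y => ∑ j, pdv j (pdv j g) y) x
  rw [pdv_sum _ fun j _ => differentiable_pdv (hpdv j) j]
  refine Finset.sum_congr rfl fun j _ => ?_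
  rw [pdv_comm hg₂ j i, pdv_comm (hpdv j) j i]

end Laplacian

section MaximumPrinciple

variable {m : ℕ}

lemma deriv_deriv_nonpos_of_isLocalMax {h : ℝ → ℝ} {t : ℝ} (hmax : IsLocalMax h t)
    (hc : ContinuousAt h t) : deriv (deriv h) t ≤ 0 := by
  by_contra! hpos
  have hmin : IsLocalMin h t := isLocalMin_of_deriv_deriv_pos hpos hmax.deriv_eq_zero hc
  have hconst : h =ᶠ[𝓝 t] fun _ => h t := by
    filter_upwards [hmax, hmin] with s h₁ h₂ using le_antisymm h₁ h₂
  have hzero : deriv (deriv h) t = 0 := by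
    rw [hconst.deriv.deriv_eq]
    simp
  exact hpos.ne' hzero

lemma deriv_comp_add_smul_single {g : Evec m → ℝ} (hg : Differentiable ℝ g) (x : Evec m)
    (i : Fin m) :
    deriv (fun s : ℝ => g (x + s • EuclideanSpace.single i (1 : ℝ)))
      = fun s => pdv i g (x + s • EuclideanSpace.single i (1 : ℝ)) := by
  funext t
  have hline : HasDerivAt (fun s : ℝ => x + s • EuclideanSpace.single i (1 : ℝ))
      (EuclideanSpace.single i (1 : ℝ)) t := by
    simpa using ((hasDerivAt_id t).smul_const (EuclideanSpace.single i (1 : ℝ))).const_add x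
  exact ((hg _).hasFDerivAt.comp_hasDerivAt t hline).deriv

lemma pdv_pdv_nonpos_of_forall_le {g : Evec m → ℝ} (hg : ContDiff ℝ 2 g) {x : Evec m}
    (hmax : ∀ y, g y ≤ g x) (i : Fin m) : pdv i (pdv i g) x ≤ 0 := by
  set h : ℝ → ℝ := fun s => g (x + s • EuclideanSpace.single i (1 : ℝ)) with hh
  have hmax' : IsLocalMax h 0 := Eventually.of_forall fun s => by simpa [hh] using hmax _
  have hc : ContinuousAt h 0 := by
    have := hg.continuous
    fun_prop
  have := deriv_deriv_nonpos_of_isLocalMax hmax' hc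
  rw [deriv_comp_add_smul_single (hg.differentiable two_ne_zero),
    deriv_comp_add_smul_single (differentiable_pdv hg i)] at this
  simpa using this

lemma exists_lapl_le_of_forall_le {Φ : Evec m → ℝ} (hΦ : ContDiff ℝ 2 Φ) {B : ℝ}
    (hB : ∀ x, Φ x ≤ B) {ε : ℝ} (hε : 0 < ε) (x₀ : Evec m) :
    ∃ x, Φ x₀ ≤ Φ x + ε * ‖x₀‖ ^ 2 ∧ lapl Φ x ≤ ε * (2 * m) := by
  set Ψ : Evec m → ℝ := fun x => Φ x + (-ε) * ‖x‖ ^ 2 with hΨ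
  have hN : ContDiff ℝ 2 fun x : Evec m => ‖x‖ ^ 2 := contDiff_norm_sq ℝ
  have hΨ₂ : ContDiff ℝ 2 Ψ := hΦ.add (contDiff_const.mul hN)
  have hlim : Tendsto Ψ (cocompact (Evec m)) atBot := by
    have hsq : Tendsto (fun x : Evec m => ‖x‖ ^ 2) (cocompact (Evec m)) atTop :=
      (tendsto_pow_atTop two_ne_zero).comp tendsto_norm_cocompact_atTop
    exact tendsto_atBot_add_left_of_ge _ B hB (hsq.const_mul_atTop_of_neg (neg_neg_of_pos hε))
  obtain ⟨x, hx⟩ := hΨ₂.continuous.exists_forall_ge hlim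
  refine ⟨x, ?_, ?_⟩
  · have := hx x₀
    simp only [hΨ] at this
    nlinarith [sq_nonneg ‖x‖]
  · have hle : lapl Ψ x ≤ 0 :=
      Finset.sum_nonpos fun i _ => pdv_pdv_nonpos_of_forall_le hΨ₂ hx i
    rw [hΨ, lapl_add hΦ (contDiff_const.mul hN), lapl_const_mul hN, lapl_norm_sq] at hle
    linarith

end MaximumPrinciple

section HarmonicLiouville

variable {m : ℕ}

lemma le_lapl_pdv_sq_add_sq {g : Evec m → ℝ} (hg : ContDiff ℝ 3 g) (hlap : ∀ x, lapl g x = 0)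
    {A : ℝ} (hA : 0 ≤ A) (i : Fin m) (x : Evec m) :
    2 * A * pdv i g x ^ 2
      ≤ lapl (fun y => pdv i g y * pdv i g y + A * (g y * g y)) x := by
  have hg₂ : ContDiff ℝ 2 g := hg.of_le (by norm_num)
  have hpdv : ContDiff ℝ 2 (pdv i g) := contDiff_pdv hg (by norm_num) i
  have hlap' : lapl (pdv i g) x = 0 := by
    rw [lapl_pdv hg, funext hlap, pdv_const]
  rw [lapl_add (hpdv.mul hpdv) (contDiff_const.mul (hg₂.mul hg₂)),
    lapl_const_mul (hg₂.mul hg₂), lapl_mul_self hg₂, lapl_mul_self hpdv, hlap', hlap]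
  have hsnd : 0 ≤ ∑ j, pdv j (pdv i g) x ^ 2 := Finset.sum_nonneg fun j _ => sq_nonneg _
  have hfst : pdv i g x ^ 2 ≤ ∑ j, pdv j g x ^ 2 :=
    Finset.single_le_sum (f := fun j => pdv j g x ^ 2) (fun j _ => sq_nonneg _)
      (Finset.mem_univ i)
  linarith [mul_le_mul_of_nonneg_left hfst hA]

/- Bernstein's method: the approximate maximum principle is applied to `(∂ᵢg)² + A g²`, whose
Laplacian dominates `2A (∂ᵢg)²`. -/
lemma sq_pdv_le_of_lapl_eq_zero {g : Evec m → ℝ} (hg : ContDiff ℝ 3 g)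
    (hlap : ∀ x, lapl g x = 0) {B : ℝ} (hB : ∀ x, |g x| ≤ B) {i : Fin m} {B' : ℝ}
    (hB' : ∀ x, |pdv i g x| ≤ B') {A : ℝ} (hA : 0 < A) (x₀ : Evec m) :
    pdv i g x₀ ^ 2 ≤ A * B ^ 2 := by
  have hg₂ : ContDiff ℝ 2 g := hg.of_le (by norm_num)
  have hpdv : ContDiff ℝ 2 (pdv i g) := contDiff_pdv hg (by norm_num) i
  have hsq (x : Evec m) : A * (g x * g x) ≤ A * B ^ 2 := by
    rw [← sq]
    exact mul_le_mul_of_nonneg_left (sq_le_sq' (abs_le.mp (hB x)).1 (abs_le.mp (hB x)).2) hA.le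
  have hsq' (x : Evec m) : pdv i g x * pdv i g x ≤ B' ^ 2 := by
    rw [← sq]
    exact sq_le_sq' (abs_le.mp (hB' x)).1 (abs_le.mp (hB' x)).2
  have hle (ε : ℝ) (hε : 0 < ε) :
      pdv i g x₀ ^ 2 ≤ A * B ^ 2 + ε * (m / A + ‖x₀‖ ^ 2) := by
    obtain ⟨x, hx, hlapx⟩ := exists_lapl_le_of_forall_le
      ((hpdv.mul hpdv).add (contDiff_const.mul (hg₂.mul hg₂)))
      (fun x => add_le_add (hsq' x) (hsq x)) hε x₀
    have hpdvx : pdv i g x ^ 2 ≤ ε * (m / A) := by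
      rw [← mul_div_assoc, le_div_iff₀ hA]
      linarith [le_lapl_pdv_sq_add_sq hg hlap hA.le i x]
    have hnonneg : 0 ≤ A * (g x₀ * g x₀) := mul_nonneg hA.le (mul_self_nonneg _)
    linarith [hsq x]
  have hlim : Tendsto (fun ε : ℝ => A * B ^ 2 + ε * (m / A + ‖x₀‖ ^ 2)) (𝓝[>] 0)
      (𝓝 (A * B ^ 2)) :=
    tendsto_nhdsWithin_of_tendsto_nhds (Continuous.tendsto' (by fun_prop) _ _ (by simp))
  exact ge_of_tendsto hlim (eventually_mem_nhdsWithin.mono hle)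

theorem pdv_eq_zero_of_lapl_eq_zero {g : Evec m → ℝ} (hg : ContDiff ℝ 3 g)
    (hlap : ∀ x, lapl g x = 0) {B : ℝ} (hB : ∀ x, |g x| ≤ B) {i : Fin m} {B' : ℝ}
    (hB' : ∀ x, |pdv i g x| ≤ B') (x : Evec m) : pdv i g x = 0 := by
  have hlim : Tendsto (fun A : ℝ => A * B ^ 2) (𝓝[>] 0) (𝓝 0) :=
    tendsto_nhdsWithin_of_tendsto_nhds (Continuous.tendsto' (by fun_prop) _ _ (by simp))
  have hle : pdv i g x ^ 2 ≤ 0 := ge_of_tendsto hlim (eventually_mem_nhdsWithin.mono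
    fun A hA => sq_pdv_le_of_lapl_eq_zero hg hlap hB hB' hA x)
  exact pow_eq_zero_iff two_ne_zero |>.mp (le_antisymm hle (sq_nonneg _))

end HarmonicLiouville

section TensorOperators

open scoped TensorProduct
open MvPolynomial (pderiv)

variable {R V ι : Type*} [CommRing R] [AddCommGroup V] [Module R V] [Fintype ι]

/-- Elements of `V ⊗ R[u]` are polynomials in `u` with coefficients in a space `V` on which
derivations `∂ᵢ` act; this is the divergence `∑ᵢ ∂_{uᵢ} ∂ᵢ`. -/
def tensorDiv (d : ι → Module.End R V) : Module.End R (V ⊗[R] MvPolynomial ι R) :=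
  ∑ i, TensorProduct.map (d i) (pderiv i).toLinearMap

/-- The operator `∑ᵢ uᵢ ∂ᵢ` on polynomials in `u` with coefficients in `V`. -/
def tensorGrad (d : ι → Module.End R V) : Module.End R (V ⊗[R] MvPolynomial ι R) :=
  ∑ i, TensorProduct.map (d i) (LinearMap.mulLeft R (MvPolynomial.X i))

/-- The Laplacian `∑ᵢ ∂ᵢ²` on polynomials in `u` with coefficients in `V`. -/
def tensorLapl (d : ι → Module.End R V) : Module.End R (V ⊗[R] MvPolynomial ι R) :=
  (∑ i, d i * d i).rTensor _

variable (ι R V) in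
/-- Multiplication by `|u|² = ∑ᵢ uᵢ²` on polynomials in `u` with coefficients in `V`. -/
def tensorNormSq : Module.End R (V ⊗[R] MvPolynomial ι R) :=
  (LinearMap.mulLeft R (∑ i, MvPolynomial.X i ^ 2)).lTensor V

/-- The operator `Δ - a ⟨u, ∂⟩⟨∂_u, ∂⟩ + b |u|² ⟨∂_u, ∂⟩²` on polynomials in `u` with coefficients
in `V`. The bosonic Laplacian is the case `a = 4 / (m + 2k - 2)`,
`b = 4 / ((m + 2k - 2) (m + 2k - 4))`. -/
def tensorBosonic (d : ι → Module.End R V) (a b : R) :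
    Module.End R (V ⊗[R] MvPolynomial ι R) :=
  tensorLapl d - a • (tensorGrad d * tensorDiv d)
    + b • (tensorNormSq R V ι * tensorDiv d * tensorDiv d)

variable {d : ι → Module.End R V}

@[simp]
lemma tensorDiv_tmul (v : V) (P : MvPolynomial ι R) :
    tensorDiv d (v ⊗ₜ P) = ∑ i, d i v ⊗ₜ pderiv i P := by
  simp [tensorDiv]

@[simp]
lemma tensorGrad_tmul (v : V) (P : MvPolynomial ι R) :
    tensorGrad d (v ⊗ₜ P) = ∑ i, d i v ⊗ₜ (MvPolynomial.X i * P) := by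
  simp [tensorGrad]

@[simp]
lemma tensorLapl_tmul (v : V) (P : MvPolynomial ι R) :
    tensorLapl d (v ⊗ₜ P) = ∑ i, d i (d i v) ⊗ₜ P := by
  simp [tensorLapl, TensorProduct.sum_tmul]

@[simp]
lemma tensorNormSq_tmul (v : V) (P : MvPolynomial ι R) :
    tensorNormSq R V ι (v ⊗ₜ P) = v ⊗ₜ ((∑ i, MvPolynomial.X i ^ 2) * P) := by
  simp [tensorNormSq]

lemma tensorDiv_tensorLapl (hd : ∀ i j, Commute (d i) (d j)) (T : V ⊗[R] MvPolynomial ι R) :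
    tensorDiv d (tensorLapl d T) = tensorLapl d (tensorDiv d T) := by
  refine LinearMap.congr_fun (f := tensorDiv d * tensorLapl d)
    (g := tensorLapl d * tensorDiv d) (TensorProduct.ext' fun v P => ?_) T
  have hcomm (i j : ι) : d i (d j (d j v)) = d j (d j (d i v)) :=
    LinearMap.congr_fun ((hd i j).mul_right (hd i j)).eq v
  simp only [Module.End.mul_apply, tensorLapl_tmul, tensorDiv_tmul, map_sum, hcomm]
  rw [Finset.sum_comm]

lemma tensorDiv_tensorGrad (hd : ∀ i j, Commute (d i) (d j)) (T : V ⊗[R] MvPolynomial ι R) :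
    tensorDiv d (tensorGrad d T) = tensorGrad d (tensorDiv d T) + tensorLapl d T := by
  classical
  refine LinearMap.congr_fun (f := tensorDiv d * tensorGrad d)
    (g := tensorGrad d * tensorDiv d + tensorLapl d) (TensorProduct.ext' fun v P => ?_) T
  have hleibniz (i j : ι) : d i (d j v) ⊗ₜ[R] pderiv i (MvPolynomial.X j * P)
      = d j (d i v) ⊗ₜ (MvPolynomial.X j * pderiv i P) + if i = j then d i (d i v) ⊗ₜ P else 0 := by
    have hcomm : d i (d j v) = d j (d i v) := LinearMap.congr_fun (hd i j).eq v
    rw [Derivation.leibniz, MvPolynomial.pderiv_X, TensorProduct.tmul_add, hcomm]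
    obtain rfl | hij := eq_or_ne i j
    · simp
    · simp [hij]
  simp only [Module.End.mul_apply, LinearMap.add_apply, tensorLapl_tmul, tensorDiv_tmul,
    tensorGrad_tmul, map_sum, hleibniz]
  rw [Finset.sum_comm]
  simp [Finset.sum_add_distrib]

lemma tensorDiv_tensorNormSq (T : V ⊗[R] MvPolynomial ι R) :
    tensorDiv d (tensorNormSq R V ι T)
      = tensorNormSq R V ι (tensorDiv d T) + (2 : R) • tensorGrad d T := by
  classical
  refine LinearMap.congr_fun (f := tensorDiv d * tensorNormSq R V ι)
    (g := tensorNormSq R V ι * tensorDiv d + (2 : R) • tensorGrad d)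
    (TensorProduct.ext' fun v P => ?_) T
  have hleibniz (i : ι) : pderiv i ((∑ j, MvPolynomial.X j ^ 2) * P)
      = (∑ j, MvPolynomial.X j ^ 2) * pderiv i P + (2 : R) • (MvPolynomial.X i * P) := by
    have hsq : pderiv i (∑ j, MvPolynomial.X j ^ 2 : MvPolynomial ι R) = 2 * MvPolynomial.X i := by
      simp [Derivation.leibniz_pow, MvPolynomial.pderiv_X, Pi.single_apply]
    rw [Derivation.leibniz, hsq, smul_eq_mul, smul_eq_mul, two_smul]
    ring
  simp [hleibniz, TensorProduct.tmul_add, Finset.sum_add_distrib, Finset.smul_sum]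

end TensorOperators

section Hierarchy

open scoped TensorProduct
open MvPolynomial (pderiv)

variable {R V ι : Type*} [CommRing R] [AddCommGroup V] [Module R V] [Fintype ι]
  {d : ι → Module.End R V}

lemma tensorBosonic_tensorDiv_pow (hd : ∀ i j, Commute (d i) (d j)) {a b : R}
    {T : V ⊗[R] MvPolynomial ι R} (hT : tensorBosonic d a b T = 0) (j : ℕ) :
    (1 - j * a + j * (j - 1) * b) • tensorLapl d ((tensorDiv d ^ j) T)
      - (a - 2 * j * b) • tensorGrad d ((tensorDiv d ^ (j + 1)) T)
      + b • tensorNormSq R V ι ((tensorDiv d ^ (j + 2)) T) = 0 := by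
  have hpow (n : ℕ) : (tensorDiv d ^ (n + 1)) T = tensorDiv d ((tensorDiv d ^ n) T) := by
    rw [pow_succ', Module.End.mul_apply]
  induction j with
  | zero => simpa [tensorBosonic, hpow] using hT
  | succ j ih =>
    have h := congrArg (tensorDiv d) ih
    simp only [map_add, map_sub, map_smul, map_zero, hpow, tensorDiv_tensorLapl hd,
      tensorDiv_tensorGrad hd, tensorDiv_tensorNormSq] at h ⊢
    rw [← h]
    push_cast
    module

lemma tensorDiv_pow_tmul_eq_zero {k : ℕ} (v : V) {P : MvPolynomial ι R}
    (hP : P.IsHomogeneous k) : (tensorDiv d ^ (k + 1)) (v ⊗ₜ[R] P) = 0 := by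
  induction k generalizing v P with
  | zero =>
    rw [MvPolynomial.totalDegree_eq_zero_iff_eq_C.mp (Nat.le_zero.mp hP.totalDegree_le)]
    simp
  | succ k ih =>
    rw [pow_succ, Module.End.mul_apply, tensorDiv_tmul, map_sum]
    exact Finset.sum_eq_zero fun i _ => ih _ hP.pderiv

lemma rTensor_eq_zero_of_ker_le {V' V'' N : Type*} [AddCommGroup V'] [Module R V']
    [AddCommGroup V''] [Module R V''] [AddCommGroup N] [Module R N] [Module.Flat R N]
    {f : V →ₗ[R] V'} {g : V →ₗ[R] V''} (hfg : LinearMap.ker f ≤ LinearMap.ker g) {T : V ⊗[R] N}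
    (hT : f.rTensor N T = 0) : g.rTensor N T = 0 := by
  obtain ⟨S, rfl⟩ :=
    (Module.Flat.rTensor_exact N (LinearMap.exact_subtype_ker_map f) T).mp hT
  have hzero : g ∘ₗ (LinearMap.ker f).subtype = 0 := LinearMap.ext fun v => hfg v.2
  rw [← LinearMap.rTensor_comp_apply, hzero, LinearMap.rTensor_zero, LinearMap.zero_apply]

lemma tensorDiv_eq_zero {T : V ⊗[R] MvPolynomial ι R} (hT : ∀ i, (d i).rTensor _ T = 0) :
    tensorDiv d T = 0 := by
  rw [tensorDiv, LinearMap.sum_apply]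
  refine Finset.sum_eq_zero fun i _ => ?_
  rw [← LinearMap.lTensor_comp_rTensor, LinearMap.comp_apply, hT, map_zero]

lemma tensorGrad_eq_zero {T : V ⊗[R] MvPolynomial ι R} (hT : ∀ i, (d i).rTensor _ T = 0) :
    tensorGrad d T = 0 := by
  rw [tensorGrad, LinearMap.sum_apply]
  refine Finset.sum_eq_zero fun i _ => ?_
  rw [← LinearMap.lTensor_comp_rTensor, LinearMap.comp_apply, hT, map_zero]

theorem rTensor_eq_zero_of_tensorBosonic_eq_zero (hd : ∀ i j, Commute (d i) (d j))
    (hliouville : ∀ i, LinearMap.ker (∑ j, d j * d j) ≤ LinearMap.ker (d i)) {k : ℕ} {a b : R}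
    (hab : ∀ j : ℕ, j ≤ k → IsUnit (1 - j * a + j * (j - 1) * b)) {T : V ⊗[R] MvPolynomial ι R}
    (hk : (tensorDiv d ^ (k + 1)) T = 0) (hT : tensorBosonic d a b T = 0) (i : ι) :
    (d i).rTensor _ T = 0 := by
  have hstep (j : ℕ) (hj : j ≤ k + 1) : ∀ i, (d i).rTensor _ ((tensorDiv d ^ j) T) = 0 := by
    induction hj using Nat.decreasingInduction with
    | self => simp [hk]
    | of_succ j hj ih =>
      have hdiv : (tensorDiv d ^ (j + 2)) T = 0 := by
        rw [pow_succ', Module.End.mul_apply]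
        exact tensorDiv_eq_zero ih
      have hlapl := tensorBosonic_tensorDiv_pow hd hT j
      rw [hdiv, tensorGrad_eq_zero ih, map_zero, smul_zero, smul_zero, sub_zero, add_zero,
        (hab j (Nat.lt_succ_iff.mp hj)).smul_eq_zero] at hlapl
      exact fun i => rTensor_eq_zero_of_ker_le (hliouville i) hlapl
  simpa using hstep 0 (Nat.zero_le _) i

end Hierarchy

section TensorEvaluation

open scoped TensorProduct
open MvPolynomial (pderiv eval aeval)

variable {R V ι : Type*} [CommRing R] [AddCommGroup V] [Module R V]

variable (V) in
/-- The value at `u` of a polynomial with coefficients in `V`. -/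
def tensorEval (u : ι → R) : V ⊗[R] MvPolynomial ι R →ₗ[R] V :=
  TensorProduct.rid R V ∘ₗ (aeval u).toLinearMap.lTensor V

@[simp]
lemma tensorEval_tmul (u : ι → R) (v : V) (P : MvPolynomial ι R) :
    tensorEval V u (v ⊗ₜ P) = eval u P • v := by
  simp [tensorEval, MvPolynomial.aeval_eq_eval]

lemma tensorEval_rTensor {V' : Type*} [AddCommGroup V'] [Module R V'] (u : ι → R)
    (g : V →ₗ[R] V') (T : V ⊗[R] MvPolynomial ι R) :
    tensorEval V' u (g.rTensor _ T) = g (tensorEval V u T) := by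
  induction T <;> simp_all

lemma eq_zero_of_tensorEval_eq_zero [IsDomain R] [Module.Free R V] (s : ι → Set R)
    (hs : ∀ i, (s i).Infinite) {T : V ⊗[R] MvPolynomial ι R}
    (hT : ∀ u ∈ Set.univ.pi s, tensorEval V u T = 0) : T = 0 := by
  classical
  let b := Module.Free.chooseBasis R V
  have heval (u : ι → R) (S : V ⊗[R] MvPolynomial ι R) (l) :
      eval u (TensorProduct.equivFinsuppOfBasisLeft b S l) = b.repr (tensorEval V u S) l := by
    induction S with
    | zero => simp
    | add S S' hS hS' => simp [hS, hS']
    | tmul v P => simp [mul_comm]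
  refine (TensorProduct.equivFinsuppOfBasisLeft b).map_eq_zero_iff.mp (Finsupp.ext fun l => ?_)
  exact MvPolynomial.funext_set s hs fun u hu => by simp [heval, hT u hu]

variable [Fintype ι] [DecidableEq ι]

/-- The coefficient of `∂ᵢ∂ⱼ v` in the value at `u` of the bosonic Laplacian of `v ⊗ P`. -/
def bosonicSymbol (a b : R) (u : ι → R) (P : MvPolynomial ι R) (i j : ι) : R :=
  (if i = j then eval u P else 0) - a * (u i * eval u (pderiv j P))
    + b * ((∑ l, u l ^ 2) * eval u (pderiv i (pderiv j P)))

lemma tensorEval_tensorBosonic_tmul (d : ι → Module.End R V) (a b : R) (u : ι → R) (v : V)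
    (P : MvPolynomial ι R) :
    tensorEval V u (tensorBosonic d a b (v ⊗ₜ P))
      = ∑ i, ∑ j, bosonicSymbol a b u P i j • d i (d j v) := by
  have hgrad : tensorEval V u (tensorGrad d (tensorDiv d (v ⊗ₜ P)))
      = ∑ i, ∑ j, (u i * eval u (pderiv j P)) • d i (d j v) := by
    simp only [tensorDiv_tmul, tensorGrad_tmul, map_sum, tensorEval_tmul, map_mul,
      MvPolynomial.eval_X]
    exact Finset.sum_comm
  have hnormSq : tensorEval V u (tensorNormSq R V ι (tensorDiv d (tensorDiv d (v ⊗ₜ P))))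
      = ∑ i, ∑ j, ((∑ l, u l ^ 2) * eval u (pderiv i (pderiv j P))) • d i (d j v) := by
    simp only [tensorDiv_tmul, tensorNormSq_tmul, map_sum, tensorEval_tmul, map_mul, map_pow,
      MvPolynomial.eval_X]
    exact Finset.sum_comm
  simp only [tensorBosonic, LinearMap.add_apply, LinearMap.sub_apply, LinearMap.smul_apply,
    Module.End.mul_apply, map_add, map_sub, map_smul, hgrad, hnormSq, tensorLapl_tmul, map_sum,
    tensorEval_tmul, Finset.smul_sum, smul_smul, bosonicSymbol, add_smul, sub_smul, ite_smul,
    zero_smul, Finset.sum_add_distrib, Finset.sum_sub_distrib, Finset.sum_ite_eq,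
    Finset.mem_univ, if_true]

end TensorEvaluation

section PolynomialFunctions

open MvPolynomial (eval pderiv)

variable {m : ℕ}

lemma contDiff_eval_coord {n : WithTop ℕ∞} (P : MvPolynomial (Fin m) ℝ) :
    ContDiff ℝ n fun u : Evec m => eval (fun i => u i) P := by
  induction P using MvPolynomial.induction_on with
  | C a => simpa using contDiff_const
  | add p q hp hq => simpa using hp.add hq
  | mul_X p j hp => simpa using hp.mul (by fun_prop)

lemma pdv_eval_coord (i : Fin m) (P : MvPolynomial (Fin m) ℝ) :
    pdv i (fun u => eval (fun j => u j) P) = fun u => eval (fun j => u j) (pderiv i P) := by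
  have hd (P : MvPolynomial (Fin m) ℝ) : Differentiable ℝ fun u : Evec m => eval (fun i => u i) P :=
    (contDiff_eval_coord (n := 1) P).differentiable one_ne_zero
  induction P using MvPolynomial.induction_on with
  | C a => simp [pdv_const]
  | add p q hp hq => simp only [map_add, pdv_add (hd p) (hd q), hp, hq]
  | mul_X p j hp =>
    simp only [map_mul, MvPolynomial.eval_X]
    rw [pdv_mul (hd p) (by fun_prop), hp, pdv_coord]
    funext u
    simp [Derivation.leibniz, MvPolynomial.pderiv_X, Pi.single_apply, apply_ite]

lemma exists_infinite_pi_subset_ball (m : ℕ) : ∃ s : Fin m → Set ℝ, (∀ i, (s i).Infinite) ∧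
    ∀ u ∈ Set.univ.pi s, WithLp.toLp 2 u ∈ ball (0 : Evec m) 1 := by
  have hnhds : (WithLp.toLp 2 : (Fin m → ℝ) → Evec m) ⁻¹' ball 0 1 ∈ 𝓝 0 :=
    (PiLp.continuous_toLp 2 _).continuousAt.preimage_mem_nhds (ball_mem_nhds _ one_pos)
  obtain ⟨δ, hδ, hsub⟩ := Metric.mem_nhds_iff.mp hnhds
  refine ⟨fun _ => ball 0 δ, fun i => ?_, fun u hu => hsub ?_⟩
  · rw [Real.ball_eq_Ioo]
    exact Set.Ioo_infinite (by linarith)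
  · rwa [ball_pi _ hδ]

lemma eq_zero_of_eval_eq_zero_on_ball {P : MvPolynomial (Fin m) ℝ}
    (h : ∀ u ∈ ball (0 : Evec m) 1, eval (fun i => u i) P = 0) : P = 0 := by
  obtain ⟨s, hs, hsub⟩ := exists_infinite_pi_subset_ball m
  exact MvPolynomial.funext_set s hs fun u hu => by simpa using h _ (hsub u hu)

end PolynomialFunctions

section Homogeneous

open MvPolynomial (eval homogeneousComponent)

variable {R σ : Type*} [CommRing R]

lemma eval_smul_of_isHomogeneous {P : MvPolynomial σ R} {n : ℕ} (hP : P.IsHomogeneous n) (c : R)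
    (v : σ → R) : eval (c • v) P = c ^ n * eval v P := by
  simp only [MvPolynomial.eval_eq, Finset.mul_sum]
  refine Finset.sum_congr rfl fun d hd => ?_
  have hdeg : ∑ i ∈ d.support, d i = n := by
    rw [← hP (MvPolynomial.mem_support_iff.mp hd), ← Finsupp.degree_apply,
      Finsupp.degree_eq_weight_one]
    rfl
  simp only [Pi.smul_apply, smul_eq_mul, mul_pow, Finset.prod_mul_distrib,
    Finset.prod_pow_eq_pow_sum, hdeg]
  ring

/- Comparing the homogeneous components `Pₙ` of both sides gives `(cⁿ - cᵏ) Pₙ = 0`. -/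
lemma isHomogeneous_of_eval_smul [IsDomain R] [Infinite R] {P : MvPolynomial σ R} {k : ℕ} {c : R}
    (hc : Function.Injective (c ^ · : ℕ → R)) (h : ∀ v, eval (c • v) P = c ^ k * eval v P) :
    P.IsHomogeneous k := by
  have hsum : ∑ n ∈ Finset.range (P.totalDegree + 1),
      (c ^ n - c ^ k) • homogeneousComponent n P = 0 := by
    refine MvPolynomial.funext fun v => ?_
    have hv := h v
    rw [← MvPolynomial.sum_homogeneousComponent P] at hv
    simp only [map_sum, Finset.mul_sum, eval_smul_of_isHomogeneous
      (MvPolynomial.homogeneousComponent_isHomogeneous _ P)] at hv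
    simp [MvPolynomial.smul_eval, sub_mul, Finset.sum_sub_distrib, hv]
  have hcomp (n : ℕ) (hn : n ∈ Finset.range (P.totalDegree + 1)) (hnk : n ≠ k) :
      homogeneousComponent n P = 0 := by
    have hn_eq := congrArg (homogeneousComponent n) hsum
    simp only [map_sum, map_smul, map_zero, MvPolynomial.homogeneousComponent_of_mem
      (MvPolynomial.homogeneousComponent_mem _ P), smul_ite, smul_zero, Finset.sum_ite_eq,
      if_pos hn] at hn_eq
    exact (smul_eq_zero.mp hn_eq).resolve_left (sub_ne_zero.mpr (hc.ne hnk))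
  rw [← MvPolynomial.sum_homogeneousComponent P]
  refine MvPolynomial.IsHomogeneous.sum _ _ _ fun n hn => ?_
  obtain rfl | hnk := eq_or_ne n k
  · exact MvPolynomial.homogeneousComponent_isHomogeneous n P
  · rw [hcomp n hn hnk]
    exact MvPolynomial.isHomogeneous_zero ..

lemma IsHk.exists_isHomogeneous {m k : ℕ} {q : Evec m → ℝ} (hq : IsHk m k q) :
    ∃ P : MvPolynomial (Fin m) ℝ, P.IsHomogeneous k ∧ ∀ u, q u = eval (fun i => u i) P := by
  obtain ⟨⟨P, hP⟩, hhom, -⟩ := hq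
  simp only [hP] at hhom
  exact ⟨P, isHomogeneous_of_eval_smul (pow_right_injective₀ two_pos (by norm_num))
    fun v => hhom 2 (WithLp.toLp 2 v), hP⟩

end Homogeneous

section Interpolation

lemma exists_finset_sum_smul_eq {K V α : Type*} [Field K] [AddCommGroup V] [Module K V]
    [FiniteDimensional K V] (φ : α → Module.Dual K V) (hφ : ∀ v, (∀ a, φ a v = 0) → v = 0) :
    ∃ (t : Finset α) (q : α → V), ∀ v, ∑ a ∈ t, φ a v • q a = v := by
  classical
  let b := Module.finBasis K V
  have hmem (i) : b.coord i ∈ Submodule.span K (Set.range φ) :=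
    FiniteDimensional.mem_span_of_iInf_ker_le_ker fun v hv => by
      rw [hφ v (by simpa using hv)]
      exact zero_mem _
  choose c hc using fun i => Finsupp.mem_span_range_iff_exists_finsupp.mp (hmem i)
  refine ⟨Finset.univ.biUnion fun i => (c i).support, fun a => ∑ i, c i a • b i, fun v => ?_⟩
  have hcoord (i) : ∑ a ∈ Finset.univ.biUnion (fun i => (c i).support), c i a * φ a v
      = b.repr v i := by
    rw [← b.coord_apply, ← hc i, Finsupp.sum_of_support_subset (c i)
      (Finset.subset_biUnion_of_mem (fun i => (c i).support) (Finset.mem_univ i)) _ (by simp)]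
    simp
  simp only [Finset.smul_sum, smul_smul, mul_comm (φ _ v)]
  rw [Finset.sum_comm]
  simp only [← Finset.sum_smul, hcoord, b.sum_repr]

lemma exists_interpolation_on_ball (m k : ℕ) :
    ∃ (t : Finset (ball (0 : Evec m) 1)) (Q : ball (0 : Evec m) 1 → MvPolynomial (Fin m) ℝ),
      (∀ a, (Q a).IsHomogeneous k) ∧ ∀ P : MvPolynomial (Fin m) ℝ, P.IsHomogeneous k →
        ∑ a ∈ t, MvPolynomial.eval (fun i => a.1 i) P • Q a = P := by
  let W := MvPolynomial.homogeneousSubmodule (Fin m) ℝ k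
  have : FiniteDimensional ℝ W := .of_fg (MvPolynomial.homogeneousSubmodule_fg _ _ k)
  obtain ⟨t, q, hq⟩ := exists_finset_sum_smul_eq
    (fun a : ball (0 : Evec m) 1 => (MvPolynomial.aeval fun i => a.1 i).toLinearMap ∘ₗ W.subtype)
    fun P hP => Subtype.ext <| eq_zero_of_eval_eq_zero_on_ball fun u hu => by
      simpa [MvPolynomial.aeval_eq_eval] using hP ⟨u, hu⟩
  refine ⟨t, fun a => q a, fun a => (q a).2, fun P hP => ?_⟩
  simpa [MvPolynomial.aeval_eq_eval] using congrArg Subtype.val (hq ⟨P, hP⟩)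

end Interpolation

section BoundedSmooth

open scoped ContDiff

variable {m : ℕ}

variable (m) in
/-- The space `C_b^∞(ℝ^m)` of smooth functions that are bounded together with all their
derivatives; convolving with a bump function maps bounded continuous functions into it. -/
def boundedSmooth : Submodule ℝ (Evec m → ℝ) where
  carrier := {g | ContDiff ℝ ∞ g ∧ ∀ n, ∃ C, ∀ x, ‖iteratedFDeriv ℝ n g x‖ ≤ C}
  add_mem' := by
    rintro g h ⟨hg, hgb⟩ ⟨hh, hhb⟩
    refine ⟨hg.add hh, fun n => ?_⟩
    obtain ⟨C, hC⟩ := hgb n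
    obtain ⟨C', hC'⟩ := hhb n
    refine ⟨C + C', fun x => ?_⟩
    rw [iteratedFDeriv_add_apply (hg.of_le (mod_cast le_top)).contDiffAt
      (hh.of_le (mod_cast le_top)).contDiffAt]
    exact norm_add_le_of_le (hC x) (hC' x)
  zero_mem' := ⟨contDiff_const, fun n => ⟨0, fun x => by simp [Pi.zero_def]⟩⟩
  smul_mem' := by
    rintro c g ⟨hg, hgb⟩
    refine ⟨contDiff_const.smul hg, fun n => ?_⟩
    obtain ⟨C, hC⟩ := hgb n
    refine ⟨‖c‖ * C, fun x => ?_⟩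
    rw [iteratedFDeriv_const_smul_apply (hg.of_le (mod_cast le_top)).contDiffAt, norm_smul]
    exact mul_le_mul_of_nonneg_left (hC x) (norm_nonneg c)

lemma contDiff_coe_boundedSmooth (g : boundedSmooth m) {n : ℕ∞} : ContDiff ℝ n g.1 :=
  g.2.1.of_le (mod_cast le_top)

lemma exists_abs_le_of_boundedSmooth (g : boundedSmooth m) : ∃ C, ∀ x, |g.1 x| ≤ C := by
  simpa using g.2.2 0

lemma pdv_mem_boundedSmooth {g : Evec m → ℝ} (hg : g ∈ boundedSmooth m) (i : Fin m) :
    pdv i g ∈ boundedSmooth m := by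
  obtain ⟨hsmooth, hbdd⟩ := hg
  have hfd : ContDiff ℝ ∞ (fderiv ℝ g) := hsmooth.fderiv_right (by simp)
  refine ⟨contDiff_pdv hsmooth (by simp) i, fun n => ?_⟩
  obtain ⟨C, hC⟩ := hbdd (n + 1)
  refine ⟨C, fun x => ?_⟩
  calc ‖iteratedFDeriv ℝ n (pdv i g) x‖
      ≤ ‖EuclideanSpace.single i (1 : ℝ)‖ * ‖iteratedFDeriv ℝ n (fderiv ℝ g) x‖ :=
        norm_iteratedFDeriv_clm_apply_const hfd.contDiffAt (mod_cast le_top)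
    _ = ‖iteratedFDeriv ℝ (n + 1) g x‖ := by simp [norm_iteratedFDeriv_fderiv]
    _ ≤ C := hC x

/-- The partial derivative `∂ᵢ` as an endomorphism of `C_b^∞(ℝ^m)`. -/
def boundedSmoothPDV (i : Fin m) : Module.End ℝ (boundedSmooth m) where
  toFun g := ⟨pdv i g, pdv_mem_boundedSmooth g.2 i⟩
  map_add' g h := Subtype.ext <|
    pdv_add ((contDiff_coe_boundedSmooth g (n := 1)).differentiable (by norm_num))
      ((contDiff_coe_boundedSmooth h (n := 1)).differentiable (by norm_num)) i
  map_smul' c g := Subtype.ext <|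
    pdv_const_mul ((contDiff_coe_boundedSmooth g (n := 1)).differentiable (by norm_num)) c i

@[simp]
lemma coe_boundedSmoothPDV (i : Fin m) (g : boundedSmooth m) :
    (boundedSmoothPDV i g : Evec m → ℝ) = pdv i g :=
  rfl

lemma commute_boundedSmoothPDV (i j : Fin m) :
    Commute (boundedSmoothPDV (m := m) i) (boundedSmoothPDV j) :=
  LinearMap.ext fun g => Subtype.ext <| pdv_comm (contDiff_coe_boundedSmooth g (n := 2)) i j

lemma ker_sum_boundedSmoothPDV_sq_le (i : Fin m) :
    LinearMap.ker (∑ j, boundedSmoothPDV (m := m) j * boundedSmoothPDV j)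
      ≤ LinearMap.ker (boundedSmoothPDV i) := by
  intro g hg
  have hlap (x : Evec m) : lapl g x = 0 := by
    simpa [lapl] using congrFun (congrArg Subtype.val (LinearMap.mem_ker.mp hg)) x
  obtain ⟨B, hB⟩ := exists_abs_le_of_boundedSmooth g
  obtain ⟨B', hB'⟩ := exists_abs_le_of_boundedSmooth (boundedSmoothPDV i g)
  exact Subtype.ext <| funext <|
    pdv_eq_zero_of_lapl_eq_zero (contDiff_coe_boundedSmooth g (n := 3)) hlap hB hB'

end BoundedSmooth

section Mollification

open scoped ContDiff Convolution
open ContinuousLinearMap (lsmul)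

lemma exists_norm_convolution_le {E F G : Type*} [NormedAddCommGroup E] [MeasurableSpace E]
    [BorelSpace E] [NormedAddCommGroup F] [NormedSpace ℝ F] [NormedAddCommGroup G]
    [NormedSpace ℝ G] {μ : Measure E} [IsFiniteMeasureOnCompacts μ] (L : F →L[ℝ] ℝ →L[ℝ] G)
    {φ : E → F} (hφ : Continuous φ) (hφs : HasCompactSupport φ) {c : E → ℝ} {B : ℝ}
    (hB : ∀ x, |c x| ≤ B) : ∃ C, ∀ x, ‖(φ ⋆[L, μ] c) x‖ ≤ C := by
  refine ⟨∫ t, ‖L‖ * ‖φ t‖ * B ∂μ, fun x => norm_integral_le_of_norm_le ?_ (.of_forall fun t => ?_)⟩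
  · exact ((hφ.norm.integrable_of_hasCompactSupport hφs.norm).const_mul _).mul_const _
  · exact (L.le_opNorm₂ _ _).trans (mul_le_mul_of_nonneg_left (hB _) (by positivity))

lemma exists_norm_iteratedFDeriv_convolution_le.{u} {E F G : Type u} [NormedAddCommGroup E]
    [NormedSpace ℝ E] [FiniteDimensional ℝ E] [MeasurableSpace E] [BorelSpace E]
    [NormedAddCommGroup F] [NormedSpace ℝ F] [NormedAddCommGroup G] [NormedSpace ℝ G]
    {μ : Measure E} [μ.IsAddHaarMeasure] (L : F →L[ℝ] ℝ →L[ℝ] G) {φ : E → F}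
    (hφ : ContDiff ℝ ∞ φ) (hφs : HasCompactSupport φ) {c : E → ℝ} (hc : Continuous c) {B : ℝ}
    (hB : ∀ x, |c x| ≤ B) (n : ℕ) : ∃ C, ∀ x, ‖iteratedFDeriv ℝ n (φ ⋆[L, μ] c) x‖ ≤ C := by
  induction n generalizing F G with
  | zero => simpa using exists_norm_convolution_le L hφ.continuous hφs hB
  | succ n ih =>
    have hfd : fderiv ℝ (φ ⋆[L, μ] c) = fderiv ℝ φ ⋆[L.precompL E, μ] c := funext fun x =>
      (hφs.hasFDerivAt_convolution_left L (hφ.of_le (by simp)) hc.locallyIntegrable x).fderiv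
    obtain ⟨C, hC⟩ := ih (L.precompL E) (hφ.fderiv_right (by simp)) (hφs.fderiv (𝕜 := ℝ))
    exact ⟨C, fun x => by simpa only [← norm_iteratedFDeriv_fderiv, hfd] using hC x⟩

variable {m : ℕ}

lemma convolution_mem_boundedSmooth {φ c : Evec m → ℝ} (hφ : ContDiff ℝ ∞ φ)
    (hφs : HasCompactSupport φ) (hc : Continuous c) {B : ℝ} (hB : ∀ x, |c x| ≤ B) :
    φ ⋆[lsmul ℝ ℝ, volume] c ∈ boundedSmooth m :=
  ⟨hφs.contDiff_convolution_left _ hφ hc.locallyIntegrable,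
    exists_norm_iteratedFDeriv_convolution_le _ hφ hφs hc hB⟩

lemma integrable_mul_comp_sub_left {φ c : Evec m → ℝ} (hφ : Continuous φ)
    (hφs : HasCompactSupport φ) (hc : Continuous c) (x : Evec m) :
    Integrable fun t => φ t * c (x - t) :=
  (hφ.mul (by fun_prop)).integrable_of_hasCompactSupport hφs.mul_right

lemma convolution_sum_smul {ι : Type*} {φ : Evec m → ℝ} (hφ : Continuous φ)
    (hφs : HasCompactSupport φ) (s : Finset ι) (r : ι → ℝ) {c : ι → Evec m → ℝ}
    (hc : ∀ a, Continuous (c a)) :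
    (φ ⋆[lsmul ℝ ℝ, volume] fun x => ∑ a ∈ s, r a * c a x)
      = fun x => ∑ a ∈ s, r a * (φ ⋆[lsmul ℝ ℝ, volume] c a) x := by
  funext x
  simp only [convolution_lsmul, smul_eq_mul, Finset.mul_sum, mul_left_comm (φ _) (r _)]
  rw [integral_finsetSum s fun a _ =>
    (integrable_mul_comp_sub_left hφ hφs (hc a) x).const_mul (r a)]
  simp only [integral_const_mul]

lemma pdv_convolution_left {φ c : Evec m → ℝ} (hφ : ContDiff ℝ 1 φ) (hφs : HasCompactSupport φ)
    (hc : Continuous c) (i : Fin m) :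
    pdv i (φ ⋆[lsmul ℝ ℝ, volume] c) = pdv i φ ⋆[lsmul ℝ ℝ, volume] c := by
  funext x
  have hderiv := hφs.hasFDerivAt_convolution_right (lsmul ℝ ℝ).flip hc.locallyIntegrable hφ x
    (μ := volume)
  rw [← convolution_flip, pdv, hderiv.fderiv, convolution_precompR_apply _ hc.locallyIntegrable
    (hφs.fderiv (𝕜 := ℝ)) (hφ.continuous_fderiv one_ne_zero), ← convolution_flip]
  rfl

lemma pdv_convolution_eq_convolution_pdv {φ c : Evec m → ℝ} (hφ : ContDiff ℝ 1 φ)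
    (hφs : HasCompactSupport φ) (hc : ContDiff ℝ 1 c) (i : Fin m) :
    pdv i φ ⋆[lsmul ℝ ℝ, volume] c = φ ⋆[lsmul ℝ ℝ, volume] pdv i c := by
  funext x
  have hcx : ContDiff ℝ 1 fun t => c (x - t) := hc.comp (contDiff_const.sub contDiff_id)
  have hpdv_cx (t : Evec m) : pdv i (fun t => c (x - t)) t = -pdv i c (x - t) := by
    have hderiv : HasFDerivAt (fun t => c (x - t)) (fderiv ℝ c (x - t) ∘L (-.id ℝ _)) t :=
      (hc.differentiable one_ne_zero (x - t)).hasFDerivAt.comp t ((hasFDerivAt_id t).const_sub x)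
    simp [pdv, hderiv.fderiv]
  have hpdvφ : Continuous (pdv i φ) := (contDiff_pdv hφ (p := 0) (by simp) i).continuous
  have hpdvc : Continuous (pdv i c) := (contDiff_pdv hc (p := 0) (by simp) i).continuous
  have hpdvφs : HasCompactSupport (pdv i φ) := hφs.fderiv_apply ..
  have hparts := integral_mul_fderiv_eq_neg_fderiv_mul_of_integrable (μ := volume) (f := φ)
    (g := fun t => c (x - t)) (v := EuclideanSpace.single i 1)
    (integrable_mul_comp_sub_left hpdvφ hpdvφs hc.continuous x)
    (by
      change Integrable fun t => φ t * pdv i _ t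
      simp only [hpdv_cx, mul_neg]
      exact (integrable_mul_comp_sub_left hφ.continuous hφs hpdvc x).neg)
    (integrable_mul_comp_sub_left hφ.continuous hφs hc.continuous x)
    (fun t _ => hφ.differentiable one_ne_zero t)
    (fun t _ => hcx.differentiable one_ne_zero t)
  change ∫ t, φ t * pdv i _ t = -∫ t, pdv i φ t * c (x - t) at hparts
  simpa only [hpdv_cx, mul_neg, integral_neg, neg_inj, convolution_lsmul, smul_eq_mul]
    using hparts.symm

lemma pdv_convolution {φ c : Evec m → ℝ} (hφ : ContDiff ℝ 1 φ) (hφs : HasCompactSupport φ)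
    (hc : ContDiff ℝ 1 c) (i : Fin m) :
    pdv i (φ ⋆[lsmul ℝ ℝ, volume] c) = φ ⋆[lsmul ℝ ℝ, volume] pdv i c :=
  (pdv_convolution_left hφ hφs hc.continuous i).trans
    (pdv_convolution_eq_convolution_pdv hφ hφs hc i)

lemma eq_of_forall_convolution_eq {c : Evec m → ℝ} (hc : Continuous c)
    (h : ∀ φ : Evec m → ℝ, ContDiff ℝ ∞ φ → HasCompactSupport φ → ∀ x y,
      (φ ⋆[lsmul ℝ ℝ, volume] c) x = (φ ⋆[lsmul ℝ ℝ, volume] c) y) (x y : Evec m) :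
    c x = c y := by
  let φ (n : ℕ) : ContDiffBump (0 : Evec m) := ⟨1 / (n + 2), 1 / (n + 1), by positivity, by
    gcongr; norm_num⟩
  have hφ : Tendsto (fun n => (φ n).rOut) atTop (𝓝 0) := tendsto_one_div_add_atTop_nhds_zero_nat
  have hlim (z : Evec m) := ContDiffBump.convolution_tendsto_right_of_continuous hφ hc z
    (μ := volume)
  refine tendsto_nhds_unique (hlim x) ((hlim y).congr fun n => ?_)
  exact h _ (φ n).contDiff_normed (φ n).hasCompactSupport_normed y x

end Mollification

section BosonicLiouville

open scoped ContDiff Convolution TensorProduct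
open ContinuousLinearMap (lsmul)
open MvPolynomial (eval pderiv)

variable {m : ℕ} {ι : Type*} {t : Finset ι} {Q : ι → MvPolynomial (Fin m) ℝ}

lemma tensorEval_eq_of_tensorBosonic_eq_zero {a b : ℝ} {k : ℕ}
    (hab : ∀ j : ℕ, j ≤ k → 1 - j * a + j * (j - 1) * b ≠ 0)
    {T : boundedSmooth m ⊗[ℝ] MvPolynomial (Fin m) ℝ}
    (hk : (tensorDiv boundedSmoothPDV ^ (k + 1)) T = 0)
    (hT : tensorBosonic boundedSmoothPDV a b T = 0) (u : Fin m → ℝ) (x y : Evec m) :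
    (tensorEval _ u T).1 x = (tensorEval _ u T).1 y := by
  refine eq_of_pdv_eq_zero
    ((contDiff_coe_boundedSmooth _ (n := 1)).differentiable one_ne_zero) (fun i z => ?_) x y
  have hrT : (boundedSmoothPDV i).rTensor _ T = 0 := rTensor_eq_zero_of_tensorBosonic_eq_zero
    commute_boundedSmoothPDV ker_sum_boundedSmoothPDV_sq_le (fun j hj => (hab j hj).isUnit) hk hT i
  rw [← coe_boundedSmoothPDV, ← tensorEval_rTensor, hrT, map_zero]
  rfl

lemma tensorBosonic_sum_convolution_tmul_eq_zero {φ : Evec m → ℝ} (hφ : ContDiff ℝ ∞ φ)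
    (hφs : HasCompactSupport φ) {c : ι → Evec m → ℝ} (hc : ∀ l, ContDiff ℝ 2 (c l))
    {v : ι → boundedSmooth m} (hv : ∀ l, v l = φ ⋆[lsmul ℝ ℝ, volume] c l) {a b : ℝ}
    (hD : ∀ x, ∀ u ∈ ball (0 : Evec m) 1,
      ∑ l ∈ t, ∑ i, ∑ j, bosonicSymbol a b u (Q l) i j * pdv i (pdv j (c l)) x = 0) :
    tensorBosonic boundedSmoothPDV a b (∑ l ∈ t, v l ⊗ₜ[ℝ] Q l) = 0 := by
  obtain ⟨s, hs, hball⟩ := exists_infinite_pi_subset_ball m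
  refine eq_zero_of_tensorEval_eq_zero s hs fun u hu => Subtype.ext <| funext fun x => ?_
  have hφ1 : ContDiff ℝ 1 φ := hφ.of_le (by simp)
  have hpdv (l : ι) (j : Fin m) : ContDiff ℝ 1 (pdv j (c l)) := contDiff_pdv (hc l) (by norm_num) j
  have hpdv_v (l : ι) (i j : Fin m) :
      pdv i (pdv j (v l)) = φ ⋆[lsmul ℝ ℝ, volume] pdv i (pdv j (c l)) := by
    rw [hv, pdv_convolution hφ1 hφs ((hc l).of_le (by norm_num)),
      pdv_convolution hφ1 hφs (hpdv l j)]
  have hsum := congrFun (convolution_sum_smul hφ.continuous hφs (t ×ˢ Finset.univ ×ˢ Finset.univ)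
    (fun p => bosonicSymbol a b u (Q p.1) p.2.1 p.2.2)
    (c := fun p => pdv p.2.1 (pdv p.2.2 (c p.1)))
    (fun p => (contDiff_pdv (hpdv p.1 p.2.2) (p := 0) (by simp) p.2.1).continuous)) x
  simp only [Finset.sum_product] at hsum
  simp only [hD _ _ (hball u hu)] at hsum
  simp only [map_sum, tensorEval_tensorBosonic_tmul, Submodule.coe_sum, Submodule.coe_smul,
    coe_boundedSmoothPDV, hpdv_v]
  have hzero : (φ ⋆[lsmul ℝ ℝ, volume] fun _ => (0 : ℝ)) x = 0 := by simp [convolution]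
  simpa [Finset.sum_apply, hzero] using hsum.symm

theorem sum_eval_mul_eq_of_sum_bosonicSymbol_mul_eq_zero {a b : ℝ} {k : ℕ}
    (hab : ∀ j : ℕ, j ≤ k → 1 - j * a + j * (j - 1) * b ≠ 0) (hQ : ∀ l, (Q l).IsHomogeneous k)
    {c : ι → Evec m → ℝ} (hc : ∀ l, ContDiff ℝ 2 (c l)) (hbdd : ∀ l, ∃ B, ∀ x, |c l x| ≤ B)
    (hD : ∀ x, ∀ u ∈ ball (0 : Evec m) 1,
      ∑ l ∈ t, ∑ i, ∑ j, bosonicSymbol a b u (Q l) i j * pdv i (pdv j (c l)) x = 0)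
    (u : Fin m → ℝ) (x y : Evec m) :
    ∑ l ∈ t, eval u (Q l) * c l x = ∑ l ∈ t, eval u (Q l) * c l y := by
  have hcont : Continuous fun x => ∑ l ∈ t, eval u (Q l) * c l x :=
    continuous_finsetSum _ fun l _ => (hc l).continuous.const_mul _
  refine eq_of_forall_convolution_eq hcont (fun φ hφ hφs x y => ?_) x y
  let v (l : ι) : boundedSmooth m := ⟨φ ⋆[lsmul ℝ ℝ, volume] c l,
    convolution_mem_boundedSmooth hφ hφs (hc l).continuous (hbdd l).choose_spec⟩
  have hT := tensorBosonic_sum_convolution_tmul_eq_zero hφ hφs hc (v := v) (fun _ => rfl) hD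
  have hk : (tensorDiv boundedSmoothPDV ^ (k + 1)) (∑ l ∈ t, v l ⊗ₜ[ℝ] Q l) = 0 := by
    rw [map_sum]
    exact Finset.sum_eq_zero fun l _ => tensorDiv_pow_tmul_eq_zero _ (hQ l)
  have heval (z : Evec m) : (tensorEval (boundedSmooth m) u (∑ l ∈ t, v l ⊗ₜ[ℝ] Q l)).1 z
      = (φ ⋆[lsmul ℝ ℝ, volume] fun x => ∑ l ∈ t, eval u (Q l) * c l x) z := by
    rw [convolution_sum_smul hφ.continuous hφs t _ fun l => (hc l).continuous]
    simp [v]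
  rw [← heval, ← heval]
  exact tensorEval_eq_of_tensorBosonic_eq_zero hab hk hT u x y

end BosonicLiouville

section CoefficientFunctions

open MvPolynomial (eval pderiv)

variable {m : ℕ} {ι : Type*} {t : Finset ι} {Q : ι → MvPolynomial (Fin m) ℝ}
  {c : ι → Evec m → ℝ} {F : Evec m → Evec m → ℝ}

lemma pd1_eq_sum
    (hF : ∀ x, ∀ u ∈ ball (0 : Evec m) 1, F x u = ∑ l ∈ t, eval (fun i => u i) (Q l) * c l x)
    (hc : ∀ l, Differentiable ℝ (c l)) (i : Fin m) (x : Evec m) {u : Evec m}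
    (hu : u ∈ ball 0 1) :
    pd1 i F x u = ∑ l ∈ t, eval (fun i => u i) (Q l) * pdv i (c l) x := by
  change pdv i (fun x => F x u) x = _
  simp only [hF _ u hu]
  rw [pdv_sum _ fun l _ => (hc l).const_mul _]
  exact Finset.sum_congr rfl fun l _ => congrFun (pdv_const_mul (hc l) _ i) x

lemma pd2_eq_sum
    (hF : ∀ x, ∀ u ∈ ball (0 : Evec m) 1, F x u = ∑ l ∈ t, eval (fun i => u i) (Q l) * c l x)
    (i : Fin m) (x : Evec m) {u : Evec m} (hu : u ∈ ball 0 1) :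
    pd2 i F x u = ∑ l ∈ t, eval (fun i => u i) (pderiv i (Q l)) * c l x := by
  have heq : (fun u => F x u) =ᶠ[𝓝 u] fun u => ∑ l ∈ t, c l x * eval (fun i => u i) (Q l) := by
    filter_upwards [isOpen_ball.mem_nhds hu] with v hv
    simp only [hF x v hv, mul_comm]
  have hd (l : ι) : Differentiable ℝ fun u : Evec m => eval (fun i => u i) (Q l) :=
    (contDiff_eval_coord (n := 1) (Q l)).differentiable one_ne_zero
  rw [pd2, heq.fderiv_eq]
  change pdv i (fun u : Evec m => ∑ l ∈ t, c l x * eval (fun i => u i) (Q l)) u = _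
  rw [pdv_sum _ fun l _ => (hd l).const_mul _]
  refine Finset.sum_congr rfl fun l _ => ?_
  rw [pdv_const_mul (hd l), pdv_eval_coord, mul_comm]

lemma Dk_eq_sum {k : ℕ}
    (hF : ∀ x, ∀ u ∈ ball (0 : Evec m) 1, F x u = ∑ l ∈ t, eval (fun i => u i) (Q l) * c l x)
    (hc : ∀ l, ContDiff ℝ 2 (c l)) (x : Evec m) {u : Evec m} (hu : u ∈ ball 0 1) :
    Dk m k F x u = ∑ l ∈ t, ∑ i, ∑ j,
      bosonicSymbol (4 / ((m : ℝ) + 2 * k - 2))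
        (4 / (((m : ℝ) + 2 * k - 2) * ((m : ℝ) + 2 * k - 4))) u (Q l) i j
        * pdv i (pdv j (c l)) x := by
  have hc0 (l : ι) : Differentiable ℝ (c l) := (hc l).differentiable two_ne_zero
  have hc1 (l : ι) (j : Fin m) : Differentiable ℝ (pdv j (c l)) := differentiable_pdv (hc l) j
  have hpd (j : Fin m) (x u) (hu : u ∈ ball 0 1) := pd1_eq_sum hF hc0 j x hu
  have hpd2 (j : Fin m) (x u) (hu : u ∈ ball 0 1) := pd2_eq_sum (hpd j) j x hu
  have hpd12 (i j : Fin m) (x u) (hu : u ∈ ball 0 1) :=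
    pd1_eq_sum (hpd2 j) (fun l => hc1 l j) i x hu
  have hswap (g : Fin m → Fin m → ι → ℝ) :
      ∑ i, ∑ j, ∑ l ∈ t, g i j l = ∑ l ∈ t, ∑ i, ∑ j, g i j l :=
    (Finset.sum_congr rfl fun i _ => Finset.sum_comm).trans Finset.sum_comm
  simp only [Dk, pd1_eq_sum (hpd _) (fun l => hc1 l _) _ x hu, hpd12 _ _ x u hu,
    pd2_eq_sum (hpd12 _ _) _ x hu]
  generalize (m : ℝ) + 2 * k - 2 = p, (m : ℝ) + 2 * k - 4 = q
  simp only [bosonicSymbol, ← EuclideanSpace.real_norm_sq_eq, Finset.mul_sum, hswap, add_mul,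
    sub_mul, ite_mul, zero_mul, Finset.sum_add_distrib, Finset.sum_sub_distrib,
    Finset.sum_ite_eq, Finset.mem_univ, if_true]
  refine congrArg₂ (· + ·) (congrArg₂ (· - ·) Finset.sum_comm ?_) ?_ <;>
    refine Finset.sum_congr rfl fun l _ => Finset.sum_congr rfl fun i _ =>
      Finset.sum_congr rfl fun j _ => ?_ <;> ring

end CoefficientFunctions

lemma one_sub_mul_add_mul_eq_div {d k j : ℝ} (h₂ : d + 2 * k - 2 ≠ 0) (h₄ : d + 2 * k - 4 ≠ 0) :
    1 - j * (4 / (d + 2 * k - 2)) + j * (j - 1) * (4 / ((d + 2 * k - 2) * (d + 2 * k - 4)))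
      = (d + 2 * (k - j) - 2) * (d + 2 * (k - j) - 4)
        / ((d + 2 * k - 2) * (d + 2 * k - 4)) := by
  field_simp
  ring

lemma one_sub_mul_add_mul_ne_zero {m k j : ℕ} (hm₀ : m ≠ 0) (hm₂ : m ≠ 2) (hm₄ : m ≠ 4)
    (hj : j ≤ k) : 1 - j * (4 / ((m : ℝ) + 2 * k - 2))
      + j * (j - 1) * (4 / (((m : ℝ) + 2 * k - 2) * ((m : ℝ) + 2 * k - 4))) ≠ 0 := by
  have hfactor (l : ℕ) : (m : ℝ) + 2 * l - 2 ≠ 0 ∧ (m : ℝ) + 2 * l - 4 ≠ 0 := by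
    rw [sub_ne_zero, sub_ne_zero]
    norm_cast
    omega
  have hkj := hfactor (k - j)
  rw [Nat.cast_sub hj] at hkj
  rw [one_sub_mul_add_mul_eq_div (hfactor k).1 (hfactor k).2]
  exact div_ne_zero (mul_ne_zero hkj.1 hkj.2) (mul_ne_zero (hfactor k).1 (hfactor k).2)

lemma C2Hk.contDiff_left {m k : ℕ} {f : Evec m → Evec m → ℝ} (hf : C2Hk m k Set.univ f)
    {u : Evec m} (hu : u ∈ ball 0 1) : ContDiff ℝ 2 fun x => f x u := by
  rw [← contDiffOn_univ]
  exact hf.1.comp (contDiff_id.prodMk contDiff_const).contDiffOn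
    fun x _ => ⟨Set.mem_univ _, hu⟩

lemma C2Hk.exists_isHomogeneous {m k : ℕ} {Ω : Set (Evec m)} {f : Evec m → Evec m → ℝ}
    (hf : C2Hk m k Ω f) {x : Evec m} (hx : x ∈ Ω) :
    ∃ P : MvPolynomial (Fin m) ℝ, P.IsHomogeneous k ∧
      ∀ u ∈ ball (0 : Evec m) 1, f x u = MvPolynomial.eval (fun i => u i) P := by
  obtain ⟨q, hq, hfq⟩ := hf.2 x hx
  obtain ⟨P, hP, hqP⟩ := hq.exists_isHomogeneous
  exact ⟨P, hP, fun u hu => (hfq u (ball_subset_closedBall hu)).trans (hqP u)⟩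

theorem stmt_17_general {m k : ℕ} (hm₂ : m ≠ 2) (hm₄ : m ≠ 4) {f : Evec m → Evec m → ℝ}
    (hpoly : ∀ x, ∃ P : MvPolynomial (Fin m) ℝ, P.IsHomogeneous k ∧
      ∀ u ∈ ball (0 : Evec m) 1, f x u = MvPolynomial.eval (fun i => u i) P)
    (hC2 : ∀ u ∈ ball (0 : Evec m) 1, ContDiff ℝ 2 fun x => f x u)
    (hbdd : ∀ u ∈ ball (0 : Evec m) 1, ∃ M, ∀ x, |f x u| ≤ M)
    (hD : ∀ x, ∀ u ∈ ball (0 : Evec m) 1, Dk m k f x u = 0) :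
    ∀ x, ∀ u ∈ ball (0 : Evec m) 1, f x u = f 0 u := by
  intro x u hu
  rcases eq_or_ne m 0 with rfl | hm₀
  · rw [Subsingleton.elim x 0]
  obtain ⟨t, Q, hQ, hinterp⟩ := exists_interpolation_on_ball m k
  have hf : ∀ x, ∀ u ∈ ball (0 : Evec m) 1,
      f x u = ∑ a ∈ t, MvPolynomial.eval (fun i => u i) (Q a) * f x a := by
    intro x u hu
    obtain ⟨P, hP, hfP⟩ := hpoly x
    conv_lhs => rw [hfP u hu, ← hinterp P hP]
    simp only [map_sum, MvPolynomial.smul_eval, hfP _ (Subtype.prop _), mul_comm]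
  rw [hf x u hu, hf 0 u hu]
  exact sum_eval_mul_eq_of_sum_bosonicSymbol_mul_eq_zero
    (fun _ => one_sub_mul_add_mul_ne_zero hm₀ hm₂ hm₄) hQ
    (fun a => hC2 a a.2) (fun a => hbdd a a.2)
    (fun x u hu => (Dk_eq_sum hf (fun a => hC2 a a.2) x hu).symm.trans (hD x u hu)) _ x 0

/-- Liouville-type theorem for bounded null solutions of the bosonic
Laplacian, `m > 4`. -/
theorem stmt_17 (m k : ℕ) (hm : 4 < m) (hk : 1 ≤ k)
    (f : Evec m → Evec m → ℝ)
    (hreg : C2Hk m k Set.univ f)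
    (hbdd : ∃ M : ℝ, ∀ x ν : Evec m, ‖ν‖ < 1 → |f x ν| ≤ M)
    (hD : ∀ x : Evec m, ∀ ν ∈ ball (0 : Evec m) 1, Dk m k f x ν = 0) :
    ∀ x ν : Evec m, ‖ν‖ < 1 → f x ν = f 0 ν := by
  simp only [← mem_ball_zero_iff] at hbdd ⊢
  exact stmt_17_general (by omega) (by omega) (fun x => hreg.exists_isHomogeneous (Set.mem_univ x))
    (fun u => hreg.contDiff_left) (fun u hu => hbdd.imp fun M hM x => hM x u hu) hD
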